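/- Let A be a commutative ring and n a positive integer. Define W_A^n to be the set A^n with the operation (a₁,…,aₙ) + (b₁,…,bₙ) = (c₁,…,cₙ), where cᵢ = aᵢ + bᵢ + Σ_{h+k=i, h,k≥1} aₕ·bₖ. Then W_A^n is a commutative group. -/

import Mathlib

/-- The Witt-type addition on `A^n`: the `i`-th coordinate (coordinates indexed `1,…,n`,
here by `Fin n` via `i ↦ i+1`) of the sum of `a` and `b` is
`aᵢ + bᵢ + Σ_{h+k=i, h,k ≥ 1} aₕ·bₖ`. -/
def wittOp {A : Type*} [CommRing A] {n : ℕ} (a b : Fin n → A) : Fin n → A :=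
  fun i => a i + b i +
    ∑ p ∈ Finset.univ.filter
      (fun p : Fin n × Fin n => (p.1.val + 1) + (p.2.val + 1) = i.val + 1),
      a p.1 * b p.2

/-!
Sending `(a₁, …, aₙ)` to `1 + a₁X + ⋯ + aₙXⁿ` turns `wittOp` into multiplication modulo `Xⁿ⁺¹`.
So taking the coefficients of `X, …, Xⁿ` maps the group of power series with constant coefficient
`1` onto `Aⁿ`, carrying products to `wittOp`, and the group laws pass to the image.
-/

section Antidiagonal

open Finset

variable {M : Type*} [AddCommMonoid M]

theorem sum_antidiagonal_succ_eq_add_sum_ne_zero (m : ℕ) (F : ℕ → ℕ → M) :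
    ∑ p ∈ antidiagonal (m + 1), F p.1 p.2 =
      F (m + 1) 0 + F 0 (m + 1) +
        ∑ p ∈ antidiagonal (m + 1) with p.1 ≠ 0 ∧ p.2 ≠ 0, F p.1 p.2 := by
  have boundary : {p ∈ antidiagonal (m + 1) | ¬(p.1 ≠ 0 ∧ p.2 ≠ 0)} =
      {(m + 1, 0), (0, m + 1)} := by
    grind [HasAntidiagonal.mem_antidiagonal]
  rw [← sum_filter_not_add_sum_filter _ fun p : ℕ × ℕ => p.1 ≠ 0 ∧ p.2 ≠ 0, boundary,
    sum_pair (by simp)]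

theorem sum_antidiagonal_ne_zero_eq_sum_fin {m n : ℕ} (hm : m ≤ n + 1) (F : ℕ → ℕ → M) :
    ∑ p ∈ antidiagonal m with p.1 ≠ 0 ∧ p.2 ≠ 0, F p.1 p.2 =
      ∑ p : Fin n × Fin n with (p.1.val + 1) + (p.2.val + 1) = m,
        F (p.1.val + 1) (p.2.val + 1) := by
  symm
  refine sum_bij (fun p _ => (p.1.val + 1, p.2.val + 1)) ?_ ?_ ?_ fun _ _ => rfl
  · simp
  · rintro ⟨p, q⟩ - ⟨r, s⟩ - h
    simpa [Fin.val_inj] using h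
  · rintro ⟨h, k⟩ hp
    obtain ⟨sum_eq, h_ne_zero, k_ne_zero⟩ : h + k = m ∧ h ≠ 0 ∧ k ≠ 0 := by simpa using hp
    obtain ⟨h, rfl⟩ := Nat.exists_eq_add_one_of_ne_zero h_ne_zero
    obtain ⟨k, rfl⟩ := Nat.exists_eq_add_one_of_ne_zero k_ne_zero
    exact ⟨(⟨h, by omega⟩, ⟨k, by omega⟩), by simpa using sum_eq, rfl⟩

end Antidiagonal

open PowerSeries in
/-- The group `1 + X R⟦X⟧` of principal units, on which multiplication lifts `wittOp`; it is
encoded as a subgroup of the units of `R⟦X⟧`. -/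
noncomputable def principalUnits (R : Type*) [Semiring R] : Subgroup R⟦X⟧ˣ :=
  (Units.map (constantCoeff (R := R)).toMonoidHom).ker

namespace principalUnits

open PowerSeries

section Semiring

variable {R : Type*} [Semiring R]

theorem mem_iff_constantCoeff_eq_one {u : R⟦X⟧ˣ} :
    u ∈ principalUnits R ↔ constantCoeff (u : R⟦X⟧) = 1 := by
  simp [principalUnits, MonoidHom.mem_ker, Units.ext_iff]

/-- The coefficients of `X, …, Xⁿ` in a principal unit, as an `n`-tuple; the entry with index
`i : Fin n` is the coefficient of `Xⁱ⁺¹`. -/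
noncomputable def coeffs (n : ℕ) (u : principalUnits R) : Fin n → R :=
  fun i => coeff (i.val + 1) (u.val : R⟦X⟧)

theorem coeffs_one (n : ℕ) : coeffs n (1 : principalUnits R) = 0 := by
  ext i
  simp [coeffs, coeff_one]

end Semiring

theorem coeffs_surjective {R : Type*} [Ring R] (n : ℕ) :
    Function.Surjective (coeffs (R := R) n) := by
  intro a
  let f : R⟦X⟧ := 1 + X * mk fun k => if hk : k < n then a ⟨k, hk⟩ else 0
  have hf : constantCoeff f = 1 := by simp [f]
  obtain ⟨u, hu⟩ : IsUnit f := isUnit_iff_constantCoeff.2 (hf ▸ isUnit_one)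
  refine ⟨⟨u, mem_iff_constantCoeff_eq_one.2 (hu ▸ hf)⟩, ?_⟩
  ext i
  simp [coeffs, hu, f, coeff_one]

theorem coeffs_mul {A : Type*} [CommRing A] (n : ℕ) (u v : principalUnits A) :
    coeffs n (u * v) = wittOp (coeffs n u) (coeffs n v) := by
  have hu := mem_iff_constantCoeff_eq_one.1 u.2
  have hv := mem_iff_constantCoeff_eq_one.1 v.2
  ext i
  have hi : i.val + 1 ≤ n + 1 := by omega
  let term (h k : ℕ) : A := coeff h (u.val : A⟦X⟧) * coeff k (v.val : A⟦X⟧)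
  have term_zero_right : term (i + 1) 0 = coeffs n u i := by simp [term, coeffs, hv]
  have term_zero_left : term 0 (i + 1) = coeffs n v i := by simp [term, coeffs, hu]
  calc coeffs n (u * v) i
      = ∑ p ∈ Finset.HasAntidiagonal.antidiagonal (i.val + 1), term p.1 p.2 := coeff_mul _ _ _
    _ = wittOp (coeffs n u) (coeffs n v) i := by
      rw [sum_antidiagonal_succ_eq_add_sum_ne_zero, term_zero_right, term_zero_left,
        sum_antidiagonal_ne_zero_eq_sum_fin hi]
      rfl

end principalUnits

/-- `W_A^n`, i.e. `A^n` with the operation `cᵢ = aᵢ + bᵢ + Σ_{h+k=i, h,k≥1} aₕbₖ`,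
is a commutative group with identity `0`. -/
theorem wittGroup (A : Type*) [CommRing A] (n : ℕ) (hn : 0 < n) :
    (∀ a b c : Fin n → A, wittOp (wittOp a b) c = wittOp a (wittOp b c)) ∧
    (∀ a b : Fin n → A, wittOp a b = wittOp b a) ∧
    (∀ a : Fin n → A, wittOp a 0 = a) ∧
    (∀ a : Fin n → A, wittOp 0 a = a) ∧
    (∀ a : Fin n → A, ∃ b : Fin n → A, wittOp a b = 0) := by
  have surj := principalUnits.coeffs_surjective (R := A) n
  have coeffs_mul := principalUnits.coeffs_mul (A := A) n
  have coeffs_one := principalUnits.coeffs_one (R := A) n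
  refine ⟨surj.forall₃.2 fun u v w => ?assoc, surj.forall₂.2 fun u v => ?comm,
    surj.forall.2 fun u => ?right_id, surj.forall.2 fun u => ?left_id,
    surj.forall.2 fun u => ⟨principalUnits.coeffs n u⁻¹, ?inv⟩⟩
  case assoc => simp only [← coeffs_mul, mul_assoc]
  case comm => rw [← coeffs_mul, ← coeffs_mul, mul_comm]
  case right_id => rw [← coeffs_one, ← coeffs_mul, mul_one]
  case left_id => rw [← coeffs_one, ← coeffs_mul, one_mul]
  case inv => rw [← coeffs_mul, mul_inv_cancel, coeffs_one]
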